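/- Suppose 1/s₁ + 1/s₂ < 1. Then as a → 0⁺ the measures μ_a converge *-weakly to μ_0, the acim of the limit map W_0; that is, for every continuous g : [0,1] → ℝ, ∫ g dμ_a → ∫ g dμ_0 as a → 0⁺. -/

import Mathlib

open MeasureTheory Filter Topology

/-- The W-like map `W_a` with parameters `s₁ s₂ p q r` and perturbation `a`. -/
noncomputable def Wmap (s₁ s₂ p q r a : ℝ) (x : ℝ) : ℝ :=
  if x < 1/2 - (1/2 + r*a)/(s₁ + p*a) then
    1 - (2*(s₁ + p*a)/(s₁ - 1 + p*a - 2*r*a)) * x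
  else if x < 1/2 then
    (s₁ + p*a)*(x - 1/2) + 1/2 + r*a
  else if x < 1/2 + (1/2 + r*a)/(s₂ + q*a) then
    -(s₂ + q*a)*(x - 1/2) + 1/2 + r*a
  else
    1 + (2*(s₂ + q*a)/(s₂ - 1 + q*a - 2*r*a)) * (x - 1)

/-- The invariant density of the unperturbed Markov map `W₀`. -/
noncomputable def h0 (s₁ s₂ : ℝ) (x : ℝ) : ℝ :=
  if x < 1/2 then 2*s₁*(s₂+1)/(2*s₁*s₂+s₁-s₂) else 2*s₂*(s₁-1)/(2*s₁*s₂+s₁-s₂)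


lemma W_ii {f : ℝ → ℝ} (hf : Measurable f) {M : ℝ} (hM : ∀ x, |f x| ≤ M) (u v : ℝ) :
    IntervalIntegrable f volume u v := by
  refine (intervalIntegrable_const (c := M)).mono_fun hf.aestronglyMeasurable ?_
  filter_upwards with x
  exact (hM x).trans (le_abs_self M)

lemma W_piece {f W : ℝ → ℝ} {A B c d u v : ℝ} (hB : 0 ≤ B)
    (hf : ∀ u v, u ≤ v → |∫ x in u..v, f x| ≤ A + B * (v - u))
    (huv : u ≤ v) (hc : c ≠ 0) (hW : ∀ x ∈ Set.Ioo u v, W x = c * x + d) :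
    |∫ x in u..v, f (W x)| ≤ 1 / |c| * A + B * (v - u) := by
  have e : ∫ x in u..v, f (W x) = ∫ x in u..v, f (c * x + d) := by
    rw [intervalIntegral.integral_of_le huv, intervalIntegral.integral_of_le huv,
      integral_Ioc_eq_integral_Ioo, integral_Ioc_eq_integral_Ioo]
    exact setIntegral_congr_fun measurableSet_Ioo fun x hx => by simp only [hW x hx]
  rw [e, intervalIntegral.integral_comp_mul_add _ hc, smul_eq_mul, abs_mul, abs_inv]
  have hc' : 0 < |c| := abs_pos.2 hc
  have key : |∫ x in c * u + d..c * v + d, f x| ≤ A + B * (|c| * (v - u)) := by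
    rcases lt_or_gt_of_ne hc with h | h
    · rw [intervalIntegral.integral_symm, abs_neg, abs_of_neg h]
      refine (hf _ _ (by nlinarith)).trans (le_of_eq (by ring))
    · rw [abs_of_pos h]
      refine (hf _ _ (by nlinarith)).trans (le_of_eq (by ring))
  calc |c|⁻¹ * |∫ x in c * u + d..c * v + d, f x| ≤ |c|⁻¹ * (A + B * (|c| * (v - u))) := by gcongr
    _ = _ := by field_simp

lemma W_two {f W : ℝ → ℝ} {A B c d c' d' u v m l l' θ : ℝ} (hA : 0 ≤ A) (hB : 0 ≤ B)
    (hf : ∀ u v, u ≤ v → |∫ x in u..v, f x| ≤ A + B * (v - u))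
    (hi : ∀ u v, IntervalIntegrable (fun x => f (W x)) volume u v)
    (huv : u ≤ v) (hl : l ≤ u) (hl' : v ≤ l') (hc : c ≠ 0) (hc' : c' ≠ 0)
    (hW : ∀ x, l < x → x < m → W x = c * x + d)
    (hW' : ∀ x, m < x → x < l' → W x = c' * x + d')
    (hθ : 1 / |c| + 1 / |c'| ≤ θ) :
    |∫ x in u..v, f (W x)| ≤ θ * A + B * (v - u) := by
  have p1 : 0 ≤ 1 / |c| := by positivity
  have p2 : 0 ≤ 1 / |c'| := by positivity
  rcases le_total v m with h | h
  · refine (W_piece hB hf huv hc (fun x hx => hW x (by linarith [hx.1]) (by linarith [hx.2]))).trans ?_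
    gcongr; linarith
  rcases le_total m u with h' | h'
  · refine (W_piece hB hf huv hc' (fun x hx => hW' x (by linarith [hx.1]) (by linarith [hx.2]))).trans ?_
    gcongr; linarith
  rw [← intervalIntegral.integral_add_adjacent_intervals (hi u m) (hi m v)]
  have a1 := W_piece hB hf h' hc (fun x hx => hW x (by linarith [hx.1]) (by linarith [hx.2]))
  have a2 := W_piece hB hf h hc' (fun x hx => hW' x (by linarith [hx.1]) (by linarith [hx.2]))
  have a3 := mul_le_mul_of_nonneg_right hθ hA
  refine (abs_add_le _ _).trans ?_
  nlinarith

/-- abstract dual Lasota-Yorke -/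
lemma W_step {f W : ℝ → ℝ} {A B a1 b1 a2 b2 a3 b3 a4 b4 u v k1 k3 θ δ : ℝ}
    (hA : 0 ≤ A) (hB : 0 ≤ B)
    (hf : ∀ u v, u ≤ v → |∫ x in u..v, f x| ≤ A + B * (v - u))
    (hi : ∀ u v, IntervalIntegrable (fun x => f (W x)) volume u v)
    (huv : u ≤ v) (n1 : a1 ≠ 0) (n2 : a2 ≠ 0) (n3 : a3 ≠ 0) (n4 : a4 ≠ 0)
    (w1 : ∀ x, x < k1 → W x = a1 * x + b1)
    (w2 : ∀ x, k1 < x → x < 1 / 2 → W x = a2 * x + b2)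
    (w3 : ∀ x, 1 / 2 < x → x < k3 → W x = a3 * x + b3)
    (w4 : ∀ x, k3 < x → W x = a4 * x + b4)
    (hδ : 0 < δ) (hk1 : δ ≤ 1 / 2 - k1) (hk3 : δ ≤ k3 - 1 / 2)
    (h12 : 1 / |a1| + 1 / |a2| ≤ θ) (h23 : 1 / |a2| + 1 / |a3| ≤ θ)
    (h34 : 1 / |a3| + 1 / |a4| ≤ θ) (hθ : θ ≤ 1) :
    |∫ x in u..v, f (W x)| ≤ θ * A + (B + 1 / δ * A) * (v - u) := by
  have L : ∀ u v, u ≤ v → v ≤ 1 / 2 → |∫ x in u..v, f (W x)| ≤ θ * A + B * (v - u) :=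
    fun u v h h' => W_two (l := u) (l' := 1 / 2) hA hB hf hi h le_rfl h' n1 n2
      (fun x _ hx => w1 x hx) w2 h12
  have R : ∀ u v, u ≤ v → 1 / 2 ≤ u → |∫ x in u..v, f (W x)| ≤ θ * A + B * (v - u) :=
    fun u v h h' => W_two (l := 1 / 2) (l' := v) hA hB hf hi h h' le_rfl n3 n4
      w3 (fun x hx _ => w4 x hx) h34
  have pe : 0 ≤ 1 / δ * A * (v - u) := by
    have := sub_nonneg.2 huv
    positivity
  rcases le_total v (1 / 2) with h | h
  · linarith [L u v huv h]
  rcases le_total (1 / 2) u with h' | h'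
  · linarith [R u v huv h']
  by_cases hc : k1 ≤ u ∧ v ≤ k3
  · have := W_two hA hB hf hi huv hc.1 hc.2 n2 n3 w2 w3 h23
    linarith
  have hlong : δ ≤ v - u := by
    by_contra hcon
    exact hc ⟨by linarith, by linarith⟩
  rw [← intervalIntegral.integral_add_adjacent_intervals (hi u (1/2)) (hi (1/2) v)]
  have e1 := L _ _ h' le_rfl
  have e2 := R _ _ h le_rfl
  have e3 : 1 ≤ 1 / δ * (v - u) := by
    rw [div_mul_eq_mul_div, one_mul, le_div_iff₀ hδ]; linarith
  have e4 := mul_le_mul_of_nonneg_right e3 hA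
  have e5 := mul_le_mul_of_nonneg_right hθ hA
  refine (abs_add_le _ _).trans ?_
  nlinarith

lemma W_iter {f W : ℝ → ℝ} (hf : Measurable f) {M : ℝ} (hM : ∀ x, |f x| ≤ M) (hWm : Measurable W)
    {a1 b1 a2 b2 a3 b3 a4 b4 k1 k3 θ δ N : ℝ}
    (hN : ∀ u v, u ≤ v → |∫ x in u..v, f x| ≤ N)
    (n1 : a1 ≠ 0) (n2 : a2 ≠ 0) (n3 : a3 ≠ 0) (n4 : a4 ≠ 0)
    (w1 : ∀ x, x < k1 → W x = a1 * x + b1)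
    (w2 : ∀ x, k1 < x → x < 1 / 2 → W x = a2 * x + b2)
    (w3 : ∀ x, 1 / 2 < x → x < k3 → W x = a3 * x + b3)
    (w4 : ∀ x, k3 < x → W x = a4 * x + b4)
    (hδ : 0 < δ) (hk1 : δ ≤ 1 / 2 - k1) (hk3 : δ ≤ k3 - 1 / 2)
    (h12 : 1 / |a1| + 1 / |a2| ≤ θ) (h23 : 1 / |a2| + 1 / |a3| ≤ θ)
    (h34 : 1 / |a3| + 1 / |a4| ≤ θ) (hθ : θ < 1) (n : ℕ) :
    ∀ u v, u ≤ v → |∫ x in u..v, f (W^[n] x)| ≤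
      θ ^ n * N + (1 / δ / (1 - θ) * (1 - θ ^ n) * N) * (v - u) := by
  have hN0 : 0 ≤ N := (abs_nonneg _).trans (hN 0 0 le_rfl)
  have hθ0 : 0 ≤ θ := le_trans (by positivity) h12
  induction n with
  | zero => intro u v h; simpa using hN u v h
  | succ n ih =>
    intro u v h
    have hm : Measurable fun x => f (W^[n] x) := hf.comp (hWm.iterate n)
    have hp : θ ^ n ≤ 1 := pow_le_one₀ hθ0 hθ.le
    have h1θ : 0 < 1 - θ := by linarith
    have hpn : 0 ≤ 1 - θ ^ n := by linarith
    have := W_step (f := fun x => f (W^[n] x)) (A := θ ^ n * N)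
      (B := 1 / δ / (1 - θ) * (1 - θ ^ n) * N) (by positivity) (by positivity) ih
      (fun u v => W_ii (hm.comp hWm) (fun x => hM _) u v) h n1 n2 n3 n4 w1 w2 w3 w4 hδ hk1 hk3
      h12 h23 h34 hθ.le
    simp only [Function.iterate_succ, Function.comp]
    refine this.trans (le_of_eq ?_)
    have : 1 - θ ≠ 0 := h1θ.ne'
    field_simp
    ring

lemma W_sum {f φ : ℝ → ℝ} (hf : Measurable f) {M : ℝ} (hM : ∀ x, |f x| ≤ M) (hφ : Continuous φ)
    {t C b η h : ℝ} (ht : 0 ≤ t) (hC : 0 ≤ C) (hh : 0 ≤ h) (hb : ∀ x, |φ x| ≤ b)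
    (hη : ∀ x y, |x - y| ≤ h → |φ x - φ y| ≤ η)
    (hN : ∀ u v, u ≤ v → |∫ x in u..v, f x| ≤ t + C * (v - u)) (x0 : ℝ) (m : ℕ) :
    |∫ x in x0..(x0 + m * h), f x * φ x| ≤
      m * (b * t) + C * (∫ x in x0..(x0 + m * h), |φ x|) + m * h * (η * (C + M)) := by
  have hM0 : 0 ≤ M := (abs_nonneg _).trans (hM 0)
  have I1 : ∀ u v, IntervalIntegrable (fun x => f x * φ x) volume u v := fun u v =>
    (W_ii hf hM u v).mul_continuousOn hφ.continuousOn
  have I2 : ∀ u v, IntervalIntegrable (fun x => |φ x|) volume u v := fun u v =>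
    hφ.abs.intervalIntegrable _ _
  induction m with
  | zero => simp
  | succ m ih =>
    set y := x0 + m * h with hy
    have e : x0 + ((m + 1 : ℕ) : ℝ) * h = y + h := by push_cast; rw [hy]; ring
    rw [e, ← intervalIntegral.integral_add_adjacent_intervals (I1 x0 y) (I1 y (y + h)),
      ← intervalIntegral.integral_add_adjacent_intervals (I2 x0 y) (I2 y (y + h))]
    have yh : y ≤ y + h := by linarith
    have c1 : ∫ x in y..(y+h), f x * φ x
        = φ y * (∫ x in y..(y+h), f x) + ∫ x in y..(y+h), f x * (φ x - φ y) := by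
      rw [← intervalIntegral.integral_const_mul, ← intervalIntegral.integral_add]
      · congr 1; ext x; ring
      · exact (W_ii hf hM _ _).const_mul _
      · exact (W_ii hf hM _ _).mul_continuousOn (hφ.sub continuous_const).continuousOn
    have c2 : |∫ x in y..(y+h), f x * (φ x - φ y)| ≤ M * η * h := by
      have := intervalIntegral.norm_integral_le_of_norm_le_const (a := y) (b := y + h)
        (f := fun x => f x * (φ x - φ y)) (C := M * η) (fun x hx => by
          rw [Set.uIoc_of_le yh] at hx
          rw [Real.norm_eq_abs, abs_mul]
          exact mul_le_mul (hM x) (hη x y (by rw [abs_le]; constructor <;> linarith [hx.1, hx.2]))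
            (abs_nonneg _) hM0)
      simpa [abs_of_nonneg hh] using this
    have c3 : h * |φ y| ≤ (∫ x in y..(y+h), |φ x|) + η * h := by
      have : ∫ x in y..(y+h), (|φ y| - η) ≤ ∫ x in y..(y+h), |φ x| := by
        refine intervalIntegral.integral_mono_on yh (by simp) (I2 _ _) fun x hx => ?_
        have := hη y x (by rw [abs_le]; constructor <;> linarith [hx.1, hx.2])
        have := abs_sub_abs_le_abs_sub (φ y) (φ x)
        linarith
      simp at this
      linarith
    have c4 : |φ y * (∫ x in y..(y+h), f x)| ≤ b * t + C * (h * |φ y|) := by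
      rw [abs_mul]
      have h1 := mul_le_mul_of_nonneg_left (hN y (y+h) yh) (abs_nonneg (φ y))
      have h2 := mul_le_mul_of_nonneg_right (hb y) ht
      nlinarith
    have c5 := mul_le_mul_of_nonneg_left c3 hC
    have c6 := abs_add_le (∫ x in x0..y, f x * φ x) (∫ x in y..(y+h), f x * φ x)
    have c7 := abs_add_le (φ y * (∫ x in y..(y+h), f x)) (∫ x in y..(y+h), f x * (φ x - φ y))
    rw [← c1] at c7
    push_cast
    nlinarith

lemma W_eps {x K D : ℝ} (h : ∀ η : ℝ, 0 < η → x ≤ K + η * D) : x ≤ K := by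
  have : Tendsto (fun η : ℝ => K + η * D) (𝓝[>] 0) (𝓝 (K + 0 * D)) := by
    refine Tendsto.mono_left ?_ nhdsWithin_le_nhds
    exact (Continuous.tendsto (by fun_prop) _)
  rw [zero_mul, add_zero] at this
  exact ge_of_tendsto this (by filter_upwards [self_mem_nhdsWithin] with η hη using h η hη)

lemma W_l1 {μ : Measure ℝ} [IsProbabilityMeasure μ] (hac : μ ≪ volume) {ψ : ℕ → ℝ → ℝ}
    (hm : ∀ n, Measurable (ψ n)) {M C c : ℝ} (hM : ∀ n x, |ψ n x| ≤ M) {t : ℕ → ℝ}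
    (ht0 : ∀ n, 0 ≤ t n) (ht : Tendsto t atTop (𝓝 0)) (hC : 0 ≤ C)
    (hN : ∀ n u v, u ≤ v → |∫ x in u..v, ψ n x| ≤ t n + C * (v - u))
    (hc : ∀ n, ∫ x, ψ n x ∂μ = c) : |c| ≤ C := by
  have hM0 : 0 ≤ M := (abs_nonneg _).trans (hM 0 0)
  set F : ℝ → ℝ := fun x => (μ.rnDeriv volume x).toReal with hF
  have hFi : Integrable F := Measure.integrable_toReal_rnDeriv
  have hF1 : ∫ x, F x = 1 := by
    rw [hF, Measure.integral_toReal_rnDeriv hac]; simp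
  have hF0 : ∀ x, 0 ≤ F x := fun x => ENNReal.toReal_nonneg
  refine W_eps (D := M + C) fun η hη => ?_
  obtain ⟨φ, hφs, hφ, hφc, hφi⟩ := hFi.exists_hasCompactSupport_integral_sub_le hη
  obtain ⟨b, hb⟩ := hφs.exists_bound_of_continuous hφc
  have hφ1 : ∫ x, |φ x| ≤ 1 + η := by
    have : ∫ x, |φ x| ≤ ∫ x, (F x + ‖F x - φ x‖) := by
      refine integral_mono hφi.abs (hFi.add (hFi.sub hφi).norm) fun x => ?_
      have := abs_sub_abs_le_abs_sub (φ x) (F x)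
      rw [abs_sub_comm, abs_of_nonneg (hF0 x)] at this
      simp only [Real.norm_eq_abs]; linarith
    have hn : Integrable (fun x => ‖F x - φ x‖) := (hFi.sub hφi).norm
    rw [integral_add hFi hn, hF1] at this
    linarith
  have huc : UniformContinuous φ := hφs.uniformContinuous_of_continuous hφc
  obtain ⟨R, hR0, hR⟩ : ∃ R : ℝ, 0 < R ∧ Function.support φ ⊆ Set.Ioc (-R) R := by
    obtain ⟨R, hR⟩ := hφs.isCompact.isBounded.subset_closedBall 0
    refine ⟨|R| + 1, by positivity, fun x hx => ?_⟩
    have := hR (subset_tsupport φ hx)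
    rw [Metric.mem_closedBall, Real.dist_eq, sub_zero, abs_le] at this
    constructor <;> linarith [le_abs_self R, this.1, this.2]
  have hint : ∀ n, Integrable (fun x => ψ n x * φ x) := fun n =>
    hφi.bdd_mul (c := M) (hm n).aestronglyMeasurable (by filter_upwards with x using hM n x)
  have hint2 : ∀ n, Integrable (fun x => ψ n x * (F x - φ x)) := fun n =>
    (hFi.sub hφi).bdd_mul (c := M) (hm n).aestronglyMeasurable (by filter_upwards with x using hM n x)
  have key1 : ∀ n, |c| ≤ M * η + |∫ x, ψ n x * φ x| := by
    intro n
    have e : c = (∫ x, ψ n x * (F x - φ x)) + ∫ x, ψ n x * φ x := by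
      rw [← integral_add (hint2 n) (hint n), ← hc n, ← integral_rnDeriv_smul hac]
      congr 1; ext x; simp only [smul_eq_mul, hF]; ring
    have e2 : |∫ x, ψ n x * (F x - φ x)| ≤ M * η := by
      calc |∫ x, ψ n x * (F x - φ x)| ≤ ∫ x, ‖ψ n x * (F x - φ x)‖ := by
            rw [← Real.norm_eq_abs]; exact norm_integral_le_integral_norm _
        _ ≤ ∫ x, M * ‖F x - φ x‖ := by
          refine integral_mono (hint2 n).norm ((hFi.sub hφi).norm.const_mul M) fun x => ?_
          simp only [norm_mul]
          exact mul_le_mul_of_nonneg_right (hM n x) (norm_nonneg _)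
        _ = M * ∫ x, ‖F x - φ x‖ := integral_const_mul _ _
        _ ≤ M * η := by gcongr
    rw [e]
    exact (abs_add_le _ _).trans (by linarith)
  have key2 : |c| ≤ M * η + C * (1 + η) := by
    refine W_eps (D := 2 * R * (C + M)) fun η' hη' => ?_
    obtain ⟨δ, hδ, hδ'⟩ := Metric.uniformContinuous_iff.1 huc η' hη'
    obtain ⟨m, hm'⟩ := exists_nat_gt (2 * R / δ)
    have hmpos : (0 : ℝ) < m := lt_trans (by positivity) hm'
    have hh : 2 * R / m < δ := by
      rw [div_lt_iff₀ hδ] at hm'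
      rw [div_lt_iff₀ hmpos]; linarith
    have bd : ∀ n, |c| ≤ M * η + (m * (b * t n) + C * (1 + η) + 2 * R * (η' * (C + M))) := by
      intro n
      have := W_sum (hm n) (hM n) hφc (ht0 n) hC (h := 2 * R / m) (by positivity) hb (η := η')
        (fun x y hxy => (hδ' (by rw [Real.dist_eq]; linarith)).le) (hN n) (-R) m
      have e : -R + m * (2 * R / m) = R := by field_simp; ring
      have e' : m * (2 * R / m) = 2 * R := by field_simp
      rw [e, e', intervalIntegral.integral_eq_integral_of_support_subset,
        intervalIntegral.integral_eq_integral_of_support_subset] at this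
      · have h1 := mul_le_mul_of_nonneg_left hφ1 hC
        linarith [key1 n]
      · refine subset_trans ?_ hR
        intro x hx; simpa using hx
      · refine subset_trans ?_ hR
        intro x hx
        exact right_ne_zero_of_mul hx
    have lim : Tendsto (fun n => M * η + (m * (b * t n) + C * (1 + η) + 2 * R * (η' * (C + M)))) atTop
        (𝓝 (M * η + (m * (b * 0) + C * (1 + η) + 2 * R * (η' * (C + M))))) := by
      have := (ht.const_mul b).const_mul (m : ℝ)
      exact ((this.add_const _).add_const _).const_add _
    have := ge_of_tendsto' lim bd
    linarith
  linarith

/-- the map in terms of slopes and height -/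
noncomputable def Wg (S T e : ℝ) (x : ℝ) : ℝ :=
  max (max (1 - (2 * S / (S - 1 - 2 * e)) * x) (min (S * (x - 1/2)) (-T * (x - 1/2)) + 1/2 + e))
    (1 + (2 * T / (T - 1 - 2 * e)) * (x - 1))

lemma Wg_eq {S T e x : ℝ} (he : 0 ≤ e) (hS : 1 + 2 * e < S) (hT : 1 + 2 * e < T) :
    (x ≤ 1/2 - (1/2 + e)/S → Wg S T e x = -(2 * S / (S - 1 - 2 * e)) * x + 1) ∧
    (1/2 - (1/2 + e)/S ≤ x → x ≤ 1/2 → Wg S T e x = S * x + (1/2 + e - S/2)) ∧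
    (1/2 ≤ x → x ≤ 1/2 + (1/2 + e)/T → Wg S T e x = -T * x + (1/2 + e + T/2)) ∧
    (1/2 + (1/2 + e)/T ≤ x → Wg S T e x
      = (2 * T / (T - 1 - 2 * e)) * x + (1 - 2 * T / (T - 1 - 2 * e))) := by
  have hS0 : 0 < S := by linarith
  have hT0 : 0 < T := by linarith
  have hS1 : 0 < S - 1 - 2 * e := by linarith
  have hT1 : 0 < T - 1 - 2 * e := by linarith
  set k := (1/2 + e)/S with hk
  set l := (1/2 + e)/T with hl
  have hk0 : 0 < k := by positivity
  have hl0 : 0 < l := by positivity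
  have hkS : S * k = 1/2 + e := by rw [hk]; field_simp
  have hlT : T * l = 1/2 + e := by rw [hl]; field_simp
  set a := 2 * S / (S - 1 - 2 * e) with ha
  set b := 2 * T / (T - 1 - 2 * e) with hb
  have ha0 : 0 < a := by positivity
  have hb0 : 0 < b := by positivity
  have hak : a * (1/2 - k) = 1 := by
    have : S * (1/2 - k) = (S - 1 - 2*e)/2 := by linarith
    rw [ha, div_mul_eq_mul_div, mul_assoc, this]; field_simp
  have hbl : b * (1/2 - l) = 1 := by
    have : T * (1/2 - l) = (T - 1 - 2*e)/2 := by linarith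
    rw [hb, div_mul_eq_mul_div, mul_assoc, this]; field_simp
  have hkk : k < 1/2 := by
    by_contra h; nlinarith
  have hll : l < 1/2 := by
    by_contra h; nlinarith
  unfold Wg
  rw [← ha, ← hb]
  refine ⟨fun h => ?_, fun h h' => ?_, fun h h' => ?_, fun h => ?_⟩
  · rw [min_eq_left (by nlinarith), max_eq_left (b := S * (x - 1/2) + 1/2 + e) (by nlinarith),
      max_eq_left (by nlinarith)]
    ring
  · rw [min_eq_left (by nlinarith), max_eq_right (a := 1 - a * x) (by nlinarith),
      max_eq_left (by nlinarith)]
    ring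
  · rw [min_eq_right (by nlinarith), max_eq_right (a := 1 - a * x) (by nlinarith),
      max_eq_left (by nlinarith)]
    ring
  · rw [min_eq_right (by nlinarith)]
    rw [max_eq_right]
    · ring
    · refine max_le (by nlinarith) (by nlinarith)

lemma Wmap_eq {s₁ s₂ p q r a : ℝ} (ha : 0 ≤ r * a) (hS : 1 + 2 * (r * a) < s₁ + p * a)
    (hT : 1 + 2 * (r * a) < s₂ + q * a) :
    Wmap s₁ s₂ p q r a = Wg (s₁ + p * a) (s₂ + q * a) (r * a) := by
  ext x
  obtain ⟨h1, h2, h3, h4⟩ := Wg_eq (x := x) ha hS hT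
  unfold Wmap
  have e1 : s₁ - 1 + p*a - 2*r*a = s₁ + p * a - 1 - 2 * (r * a) := by ring
  have e2 : s₂ - 1 + q*a - 2*r*a = s₂ + q * a - 1 - 2 * (r * a) := by ring
  rw [e1, e2]
  split_ifs with g1 g2 g3
  · rw [h1 g1.le]; ring
  · rw [h2 (not_lt.1 g1) g2.le]; ring
  · rw [h3 (not_lt.1 g2) g3.le]; ring
  · rw [h4 (not_lt.1 g3)]; ring

lemma Wg_cont (S T e : ℝ) : Continuous (Wg S T e) := by
  unfold Wg; fun_prop

/-- uniform closeness -/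
lemma Wmap_close {s₁ s₂ p q r : ℝ} (hs₁ : 1 < s₁) (hs₂ : 1 < s₂) 
    {φ : ℝ → ℝ} (hφ : Continuous φ) {ε : ℝ} (hε : 0 < ε) :
    ∀ᶠ a in 𝓝 (0:ℝ), ∀ x ∈ Set.Icc (0:ℝ) 1,
      |φ (Wg (s₁ + p * a) (s₂ + q * a) (r * a) x) - φ (Wg s₁ s₂ 0 x)| < ε := by
  have c1 : ContinuousOn (fun z : ℝ × ℝ => φ (Wg (s₁ + p * z.1) (s₂ + q * z.1) (r * z.1) z.2))
      ({a | 0 < s₁ + p * a - 1 - 2 * (r * a) ∧ 0 < s₂ + q * a - 1 - 2 * (r * a)} ×ˢ Set.univ) := by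
    refine hφ.comp_continuousOn ?_
    unfold Wg
    have d1 : ContinuousOn (fun z : ℝ × ℝ => 2 * (s₁ + p * z.1) / (s₁ + p * z.1 - 1 - 2 * (r * z.1)))
      ({a | 0 < s₁ + p * a - 1 - 2 * (r * a) ∧ 0 < s₂ + q * a - 1 - 2 * (r * a)} ×ˢ Set.univ) :=
      ContinuousOn.div (by fun_prop) (by fun_prop) (fun z hz => hz.1.1.ne')
    have d2 : ContinuousOn (fun z : ℝ × ℝ => 2 * (s₂ + q * z.1) / (s₂ + q * z.1 - 1 - 2 * (r * z.1)))
      ({a | 0 < s₁ + p * a - 1 - 2 * (r * a) ∧ 0 < s₂ + q * a - 1 - 2 * (r * a)} ×ˢ Set.univ) :=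
      ContinuousOn.div (by fun_prop) (by fun_prop) (fun z hz => hz.1.2.ne')
    fun_prop
  have op : IsOpen {a : ℝ | 0 < s₁ + p * a - 1 - 2 * (r * a) ∧ 0 < s₂ + q * a - 1 - 2 * (r * a)} := by
    apply IsOpen.and <;> exact isOpen_lt (by fun_prop) (by fun_prop)
  have m0 : (0:ℝ) ∈ {a : ℝ | 0 < s₁ + p * a - 1 - 2 * (r * a) ∧ 0 < s₂ + q * a - 1 - 2 * (r * a)} := by
    constructor <;> simp <;> linarith
  obtain ⟨d, hd, hd'⟩ := Metric.nhds_basis_closedBall.mem_iff.1 (op.mem_nhds m0)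
  have cp : IsCompact (Metric.closedBall (0:ℝ) d ×ˢ Set.Icc (0:ℝ) 1) :=
    (isCompact_closedBall _ _).prod isCompact_Icc
  have uc := cp.uniformContinuousOn_of_continuous (c1.mono (Set.prod_mono hd' (Set.subset_univ _)))
  obtain ⟨δ, hδ, H⟩ := Metric.uniformContinuousOn_iff.1 uc ε hε
  filter_upwards [Metric.ball_mem_nhds (0:ℝ) hδ, Metric.closedBall_mem_nhds (0:ℝ) hd] with a h1 h2 x hx
  have := H (a, x) ⟨h2, hx⟩ (0, x) ⟨by simp [hd.le], hx⟩ (by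
    rw [Prod.dist_eq]; simpa using h1)
  simpa [Real.dist_eq] using this

lemma W_sub {f W : ℝ → ℝ} {c d u v : ℝ} (hf : Continuous f) (huv : u ≤ v) (hc : c ≠ 0)
    (hW : ∀ x, u ≤ x → x ≤ v → W x = c * x + d) :
    ∫ x in u..v, f (W x) = c⁻¹ * ((∫ x in 0..W v, f x) - ∫ x in 0..W u, f x) := by
  have e : ∫ x in u..v, f (W x) = ∫ x in u..v, f (c * x + d) := by
    refine intervalIntegral.integral_congr fun x hx => ?_
    rw [Set.uIcc_of_le huv] at hx
    simp only [hW x hx.1 hx.2]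
  rw [e, intervalIntegral.integral_comp_mul_add _ hc, smul_eq_mul, hW u le_rfl huv, hW v huv le_rfl,
    intervalIntegral.integral_interval_sub_left (hf.intervalIntegrable _ _) (hf.intervalIntegrable _ _)]

lemma W0_step {s₁ s₂ κ E U V : ℝ} (hs₁ : 1 < s₁) (hs₂ : 1 < s₂) {f : ℝ → ℝ} (hf : Continuous f)
    (hκ1 : 1 / s₁ ≤ κ) (hκ2 : 1 / s₂ ≤ κ) (hκ : 1 / 2 ≤ κ)
    (hE : ∀ x, 0 ≤ x → x ≤ 1 → |∫ y in 0..x, f y| ≤ E)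
    (hU : ∫ y in 0..1, f y = U) (hV : ∫ y in 0..(1/2), f y = V) :
    (∀ x, 0 ≤ x → x ≤ 1 → |∫ y in 0..x, f (Wg s₁ s₂ 0 y)| ≤ κ * E + (|U| + 2 * |V|)) ∧
    (∫ y in 0..1, f (Wg s₁ s₂ 0 y) = ((1 - 1/s₁)/2 + (1 - 1/s₂)/2) * U + (1/s₁ + 1/s₂) * V) ∧
    (∫ y in 0..(1/2), f (Wg s₁ s₂ 0 y) = (1 - 1/s₁)/2 * U + 1/s₁ * V) := by
  have hE0 : 0 ≤ E := (abs_nonneg _).trans (hE 0 le_rfl zero_le_one)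
  have a1 : 0 < s₁ := by linarith
  have a2 : 0 < s₂ := by linarith
  have b1 : 0 < s₁ - 1 := by linarith
  have b2 : 0 < s₂ - 1 := by linarith
  set W := Wg s₁ s₂ 0 with hW
  have hWc : Continuous W := Wg_cont _ _ _
  have W1 := fun x => (Wg_eq (S := s₁) (T := s₂) (x := x) le_rfl (by linarith) (by linarith)).1
  have W2 := fun x => (Wg_eq (S := s₁) (T := s₂) (x := x) le_rfl (by linarith) (by linarith)).2.1
  have W3 := fun x => (Wg_eq (S := s₁) (T := s₂) (x := x) le_rfl (by linarith) (by linarith)).2.2.1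
  have W4 := fun x => (Wg_eq (S := s₁) (T := s₂) (x := x) le_rfl (by linarith) (by linarith)).2.2.2
  simp only [mul_zero, sub_zero, add_zero, ← hW] at W1 W2 W3 W4
  set k := 1/2 - 1/2/s₁ with hk
  set l := 1/2 + 1/2/s₂ with hl
  have i1 : 1 / s₁ < 1 := by rw [div_lt_one a1]; exact hs₁
  have i2 : 1 / s₂ < 1 := by rw [div_lt_one a2]; exact hs₂
  have j1 : 0 < 1 / s₁ := by positivity
  have j2 : 0 < 1 / s₂ := by positivity
  have kk : k = (1 - 1/s₁)/2 := by rw [hk]; ring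
  have ll : l = (1 + 1/s₂)/2 := by rw [hl]; ring
  have k0 : 0 < k := by linarith
  have k2 : k < 1/2 := by linarith
  have l2 : 1/2 < l := by linarith
  have l1 : l < 1 := by linarith
  have Wz : W 0 = 1 := by rw [W1 0 k0.le]; ring
  have Wk : W k = 0 := by rw [W2 k le_rfl k2.le, hk]; field_simp; ring
  have Wh : W (1/2) = 1/2 := by rw [W2 _ k2.le le_rfl]; ring
  have Wl : W l = 0 := by rw [W3 l l2.le le_rfl, hl]; field_simp; ring
  have Wo : W 1 = 1 := by rw [W4 1 l1.le]; ring
  have r1 : (2 * s₁ / (s₁ - 1))⁻¹ = (1 - 1/s₁)/2 := by field_simp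
  have r2 : (2 * s₂ / (s₂ - 1))⁻¹ = (1 - 1/s₂)/2 := by field_simp
  have p1 : ∀ x, 0 ≤ x → x ≤ k → ∫ y in 0..x, f (W y) = (1 - 1/s₁)/2 * (U - ∫ y in 0..W x, f y) := by
    intro x h h'
    rw [W_sub hf h (c := -(2 * s₁ / (s₁ - 1))) (neg_ne_zero.2 (by positivity))
      (fun y _ hy => W1 y (hy.trans h')), Wz, hU, inv_neg, r1]; ring
  have p2 : ∀ x, k ≤ x → x ≤ 1/2 → ∫ y in k..x, f (W y) = 1/s₁ * (∫ y in 0..W x, f y) := by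
    intro x h h'
    rw [W_sub hf h (c := s₁) a1.ne' (fun y g hy => W2 y g (hy.trans h')), Wk]; simp
  have p3 : ∀ x, 1/2 ≤ x → x ≤ l → ∫ y in (1/2)..x, f (W y) = 1/s₂ * (V - ∫ y in 0..W x, f y) := by
    intro x h h'
    rw [W_sub hf h (c := -s₂) (neg_ne_zero.2 a2.ne') (fun y g hy => W3 y g (hy.trans h')), Wh, hV,
      inv_neg]; ring
  have p4 : ∀ x, l ≤ x → x ≤ 1 → ∫ y in l..x, f (W y) = (1 - 1/s₂)/2 * (∫ y in 0..W x, f y) := by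
    intro x h h'
    rw [W_sub hf h (c := 2 * s₂ / (s₂ - 1)) (by positivity) (fun y g hy => W4 y g), Wl, r2]; simp
  have I : ∀ u v, IntervalIntegrable (fun y => f (W y)) volume u v := fun u v =>
    (hf.comp hWc).intervalIntegrable _ _
  have add : ∀ u v w, ∫ y in u..w, f (W y) = (∫ y in u..v, f (W y)) + ∫ y in v..w, f (W y) :=
    fun u v w => (intervalIntegral.integral_add_adjacent_intervals (I u v) (I v w)).symm
  have q1 : ∫ y in 0..k, f (W y) = (1 - 1/s₁)/2 * U := by
    rw [p1 k k0.le le_rfl, Wk]; simp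
  have q2 : ∫ y in k..(1/2), f (W y) = 1/s₁ * V := by rw [p2 _ k2.le le_rfl, Wh, hV]
  have q3 : ∫ y in (1/2)..l, f (W y) = 1/s₂ * V := by rw [p3 _ l2.le le_rfl, Wl]; simp
  have q4 : ∫ y in l..1, f (W y) = (1 - 1/s₂)/2 * U := by rw [p4 _ l1.le le_rfl, Wo, hU]
  have q12 : ∫ y in 0..(1/2), f (W y) = (1 - 1/s₁)/2 * U + 1/s₁ * V := by rw [add 0 k, q1, q2]
  have rng : ∀ x, 0 ≤ x → x ≤ 1 → 0 ≤ W x ∧ W x ≤ 1 := by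
    intro x h h'
    rcases le_total x k with c | c
    · have e : W x = 1 - x / k := by
        rw [W1 x c, ← inv_inv (2 * s₁ / (s₁ - 1)), r1, ← kk]; ring
      have : x / k ≤ 1 := by rw [div_le_one k0]; exact c
      have : 0 ≤ x / k := by positivity
      constructor <;> linarith
    rcases le_total x (1/2) with d | d
    · have e : W x = s₁ * (x - k) := by rw [W2 x c d, hk]; field_simp; ring
      have e' : W x = 1/2 - s₁ * (1/2 - x) := by rw [W2 x c d]; ring
      constructor
      · rw [e]; exact mul_nonneg a1.le (by linarith)
      · have := mul_nonneg a1.le (sub_nonneg.2 d); linarith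
    rcases le_total x l with g | g
    · have e : W x = s₂ * (l - x) := by rw [W3 x d g, hl]; field_simp; ring
      have e' : W x = 1/2 - s₂ * (x - 1/2) := by rw [W3 x d g]; ring
      constructor
      · rw [e]; exact mul_nonneg a2.le (by linarith)
      · have := mul_nonneg a2.le (sub_nonneg.2 d); linarith
    · have l1' : 0 < 1 - l := by linarith
      have e : W x = 1 - (1 - x) / (1 - l) := by
        have : 1 - l = (1 - 1/s₂)/2 := by rw [ll]; ring
        rw [W4 x g, ← inv_inv (2 * s₂ / (s₂ - 1)), r2, ← this]; field_simp; ring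
      have : (1 - x) / (1 - l) ≤ 1 := by rw [div_le_one l1']; linarith
      have : 0 ≤ (1 - x) / (1 - l) := div_nonneg (by linarith) l1'.le
      constructor <;> linarith
  refine ⟨fun x h h' => ?_, ?_, q12⟩
  · have hx := hE _ (rng x h h').1 (rng x h h').2
    have hUa := abs_nonneg U
    have hVa := abs_nonneg V
    set X := ∫ y in 0..W x, f y with hX
    have gen : ∀ α β γ : ℝ, |α| ≤ 1 → |β| ≤ 2 → |γ| ≤ κ → 
        |α * U + β * V + γ * X| ≤ κ * E + (|U| + 2 * |V|) := by
      intro α β γ ha hb hc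
      refine (abs_add_three _ _ _).trans ?_
      rw [abs_mul, abs_mul, abs_mul]
      have := mul_le_mul_of_nonneg_right ha hUa
      have := mul_le_mul_of_nonneg_right hb hVa
      have := mul_le_mul hc hx (abs_nonneg _) (by linarith)
      linarith
    rcases le_total x k with c | c
    · rw [p1 x h c]
      convert gen ((1 - 1/s₁)/2) 0 (-((1 - 1/s₁)/2)) _ _ _ using 2
      · ring
      all_goals rw [abs_le]; constructor <;> linarith
    rcases le_total x (1/2) with d | d
    · rw [add 0 k, q1, p2 x c d]
      convert gen ((1 - 1/s₁)/2) 0 (1/s₁) _ _ _ using 2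
      · ring
      all_goals rw [abs_le]; constructor <;> linarith
    rcases le_total x l with g | g
    · rw [add 0 (1/2), q12, p3 x d g]
      convert gen ((1 - 1/s₁)/2) (1/s₁ + 1/s₂) (-(1/s₂)) _ _ _ using 2
      · ring
      all_goals rw [abs_le]; constructor <;> linarith
    · rw [add 0 (1/2), q12, add (1/2) l, q3, p4 x g h']
      convert gen ((1 - 1/s₁)/2) (1/s₁ + 1/s₂) ((1 - 1/s₂)/2) _ _ _ using 2
      · ring
      all_goals rw [abs_le]; constructor <;> linarith
  · rw [add 0 (1/2), q12, add (1/2) l, q3, q4]; ring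

lemma W0_mix {s₁ s₂ : ℝ} (hs₁ : 1 < s₁) (hs₂ : 1 < s₂) {f : ℝ → ℝ} (hf : Continuous f)
    (h0 : (s₁ + s₂) * (∫ y in 0..(1/2), f y) + s₂ * (s₁ - 1) * (∫ y in 0..1, f y) = 0) :
    ∃ D ρ : ℝ, 0 ≤ ρ ∧ ρ < 1 ∧ ∀ (n : ℕ) (x : ℝ), 0 ≤ x → x ≤ 1 →
      |∫ y in 0..x, f ((Wg s₁ s₂ 0)^[n] y)| ≤ D * ρ ^ n := by
  have a1 : 0 < s₁ := by linarith
  have a2 : 0 < s₂ := by linarith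
  have b1 : 0 < s₁ - 1 := by linarith
  have i1 : 1 / s₁ < 1 := by rw [div_lt_one a1]; exact hs₁
  have i2 : 1 / s₂ < 1 := by rw [div_lt_one a2]; exact hs₂
  have j1 : 0 < 1 / s₁ := by positivity
  have j2 : 0 < 1 / s₂ := by positivity
  obtain ⟨κ, hκ1, hκ2, hκ, hκ'⟩ : ∃ κ : ℝ, 1/s₁ ≤ κ ∧ 1/s₂ ≤ κ ∧ 1/2 ≤ κ ∧ κ < 1 :=
    ⟨max (1/s₁) (max (1/s₂) (1/2)), by simp, by simp, by simp, max_lt i1 (max_lt i2 (by norm_num))⟩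
  set ρ := (κ + 1)/2 with hρ
  have hρκ : κ < ρ := by linarith
  have hρ1 : ρ < 1 := by linarith
  have hρ0 : 0 < ρ := by linarith
  set c := s₂ * (s₁ - 1) / (s₁ + s₂) with hc
  have hc0 : 0 < c := by positivity
  set U0 := ∫ y in 0..1, f y with hU0
  obtain ⟨M, hM⟩ : ∃ M, ∀ x, 0 ≤ x → x ≤ 1 → |∫ y in 0..x, f y| ≤ M := by
    obtain ⟨M, hM⟩ := (isCompact_Icc (a := (0:ℝ)) (b := 1)).exists_bound_of_continuousOn
      (f := fun x => ∫ y in 0..x, f y)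
      (intervalIntegral.continuous_primitive (fun a b => hf.intervalIntegrable a b) 0).continuousOn
    exact ⟨M, fun x h h' => hM x ⟨h, h'⟩⟩
  have hM0 : 0 ≤ M := (abs_nonneg _).trans (hM 0 le_rfl zero_le_one)
  set D := M + (1 + 2 * c) * |U0| / (ρ - κ) with hD
  have hpos : 0 < ρ - κ := by linarith
  have hDM : M ≤ D := by
    have : 0 ≤ (1 + 2 * c) * |U0| / (ρ - κ) := by positivity
    linarith
  have hD2 : κ * D + (1 + 2 * c) * |U0| ≤ ρ * D := by
    have : (ρ - κ) * D = (ρ - κ) * M + (1 + 2 * c) * |U0| := by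
      rw [hD]; field_simp
    have := mul_nonneg hpos.le hM0
    linarith
  refine ⟨D, ρ, hρ0.le, hρ1, ?_⟩
  have main : ∀ n : ℕ, (∀ x, 0 ≤ x → x ≤ 1 → |∫ y in 0..x, f ((Wg s₁ s₂ 0)^[n] y)| ≤ D * ρ ^ n) ∧
      |∫ y in 0..1, f ((Wg s₁ s₂ 0)^[n] y)| ≤ |U0| * ρ ^ n ∧
      (∫ y in 0..(1/2), f ((Wg s₁ s₂ 0)^[n] y)) = - c * ∫ y in 0..1, f ((Wg s₁ s₂ 0)^[n] y) := by
    intro n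
    induction n with
    | zero =>
      refine ⟨fun x h h' => by simpa using (hM x h h').trans hDM, by simp [hU0], ?_⟩
      simp only [Function.iterate_zero, id]
      rw [hc]; field_simp; linarith
    | succ n ih =>
      obtain ⟨ih1, ih2, ih3⟩ := ih
      set U := ∫ y in 0..1, f ((Wg s₁ s₂ 0)^[n] y) with hU
      obtain ⟨t1, t2, t3⟩ := W0_step hs₁ hs₂ (f := fun y => f ((Wg s₁ s₂ 0)^[n] y))
        (hf.comp ((Wg_cont _ _ _).iterate n)) hκ1 hκ2 hκ ih1 hU.symm ih3
      simp only [Function.iterate_succ, Function.comp]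
      have t2' : ∫ y in 0..1, f ((Wg s₁ s₂ 0)^[n] (Wg s₁ s₂ 0 y)) = (1/s₁ - 1/s₂)/2 * U := by
        rw [t2, hc]; field_simp; ring
      refine ⟨fun x h h' => (t1 x h h').trans ?_, ?_, ?_⟩
      · rw [abs_mul, abs_neg, abs_of_pos hc0]
        have := mul_le_mul_of_nonneg_left ih2 (show 0 ≤ 1 + 2 * c by positivity)
        have := mul_le_mul_of_nonneg_right hD2 (pow_nonneg hρ0.le n)
        rw [pow_succ]
        nlinarith
      · rw [t2', abs_mul, pow_succ]
        have : |(1/s₁ - 1/s₂)/2| ≤ ρ := by rw [abs_le]; constructor <;> linarith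
        have := mul_le_mul this ih2 (abs_nonneg _) hρ0.le
        linarith
      · rw [t3, t2', hc]; field_simp; ring
  exact fun n => (main n).1

set_option maxHeartbeats 1000000 in
lemma W_LY {s₁ s₂ p q r θ δ a : ℝ} (ha : 0 < a) (ha1 : a ≤ 1) (hs₁ : 1 < s₁) (hs₂ : 1 < s₂)
    (hp : 0 < p) (hq : 0 < q) (hr : 0 < r)
    (hS : 1 + 2 * (r * a) < s₁ + p * a) (hT : 1 + 2 * (r * a) < s₂ + q * a)
    (hθ0 : 1/s₁ + 1/s₂ ≤ θ) (hθ1 : (1 + 1/s₁)/2 ≤ θ) (hθ2 : (1 + 1/s₂)/2 ≤ θ) (hθ : θ < 1)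
    (hδ : 0 < δ) (hδ1 : δ ≤ 1/2/(s₁ + p)) (hδ2 : δ ≤ 1/2/(s₂ + q))
    {μ : Measure ℝ} [IsProbabilityMeasure μ] (hac : μ ≪ volume)
    (hinv : MeasurePreserving (Wg (s₁ + p * a) (s₂ + q * a) (r * a)) μ μ)
    {f : ℝ → ℝ} (hf : Measurable f) {M N : ℝ} (hM : ∀ x, |f x| ≤ M)
    (hN : ∀ u v, u ≤ v → |∫ x in u..v, f x| ≤ N) :
    |∫ x, f x ∂μ| ≤ 1 / δ / (1 - θ) * N := by
  have hN0 : 0 ≤ N := (abs_nonneg _).trans (hN 0 0 le_rfl)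
  have a1 : 0 < s₁ := by linarith
  have a2 : 0 < s₂ := by linarith
  have hra : 0 < r * a := by positivity
  have hpa : 0 < p * a := by positivity
  have hqa : 0 < q * a := by positivity
  have hθp : 0 ≤ θ := le_trans (by positivity) hθ0
  have h1θ : 0 < 1 - θ := by linarith
  set S := s₁ + p * a with hSd
  set T := s₂ + q * a with hTd
  set e := r * a with he
  have S0 : 0 < S := by linarith
  have T0 : 0 < T := by linarith
  have S1 : 0 < S - 1 - 2 * e := by linarith
  have T1 : 0 < T - 1 - 2 * e := by linarith
  have iS : 1 / S ≤ 1 / s₁ := one_div_le_one_div_of_le a1 (by linarith)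
  have iT : 1 / T ≤ 1 / s₂ := one_div_le_one_div_of_le a2 (by linarith)
  have rS : 1 / |-(2 * S / (S - 1 - 2 * e))| = (1 - 1/S)/2 - e / S := by
    rw [abs_neg, abs_of_pos (by positivity)]; field_simp
  have rT : 1 / |2 * T / (T - 1 - 2 * e)| = (1 - 1/T)/2 - e / T := by
    rw [abs_of_pos (by positivity)]; field_simp
  have eS : 0 ≤ e / S := by positivity
  have eT : 0 ≤ e / T := by positivity
  have hpa1 : p * a ≤ p := mul_le_of_le_one_right hp.le ha1
  have hqa1 : q * a ≤ q := mul_le_of_le_one_right hq.le ha1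
  have dS : δ ≤ (1/2 + e)/S :=
    hδ1.trans (div_le_div₀ (by linarith) (by linarith) S0 (by linarith))
  have dT : δ ≤ (1/2 + e)/T :=
    hδ2.trans (div_le_div₀ (by linarith) (by linarith) T0 (by linarith))
  have W1 := fun x => (Wg_eq (S := S) (T := T) (x := x) hra.le hS hT).1
  have W2 := fun x => (Wg_eq (S := S) (T := T) (x := x) hra.le hS hT).2.1
  have W3 := fun x => (Wg_eq (S := S) (T := T) (x := x) hra.le hS hT).2.2.1
  have W4 := fun x => (Wg_eq (S := S) (T := T) (x := x) hra.le hS hT).2.2.2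
  have hWm : Measurable (Wg S T e) := (Wg_cont _ _ _).measurable
  have nS : -(2 * S / (S - 1 - 2 * e)) ≠ 0 := neg_ne_zero.2 (div_pos (by linarith) S1).ne'
  have nT : 2 * T / (T - 1 - 2 * e) ≠ 0 := (div_pos (by linarith) T1).ne'
  have it := W_iter hf hM hWm hN (δ := δ) (θ := θ) nS S0.ne'
    (neg_ne_zero.2 T0.ne') nT
    (fun x h => W1 x h.le) (fun x h h' => W2 x h.le h'.le) (fun x h h' => W3 x h.le h'.le)
    (fun x h => W4 x h.le) hδ (by linarith) (by linarith)
    (by rw [rS, abs_of_pos S0]; linarith)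
    (by rw [abs_neg, abs_of_pos S0, abs_of_pos T0]; linarith)
    (by rw [rT, abs_neg, abs_of_pos T0]; linarith) hθ
  refine W_l1 hac (ψ := fun n x => f ((Wg S T e)^[n] x)) (t := fun n => θ ^ n * N)
    (fun n => hf.comp (hWm.iterate n)) (fun n x => hM _) (fun n => by positivity) ?_ (by positivity)
    (fun n u v huv => (it n u v huv).trans ?_) (fun n => ?_)
  · simpa using (tendsto_pow_atTop_nhds_zero_of_lt_one hθp hθ).mul_const N
  · have h1 : 0 ≤ θ ^ n := by positivity
    have h2 : 0 ≤ v - u := by linarith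
    have h3 : 0 ≤ 1 / δ / (1 - θ) := by positivity
    have : 1 / δ / (1 - θ) * (1 - θ ^ n) * N ≤ 1 / δ / (1 - θ) * N := by
      refine mul_le_mul_of_nonneg_right ?_ hN0
      nlinarith
    have := mul_le_mul_of_nonneg_right this h2
    linarith
  · have hi := hinv.iterate n
    conv_rhs => rw [← hi.map_eq]
    rw [integral_map hi.measurable.aemeasurable hf.aestronglyMeasurable]

lemma W_clip {f : ℝ → ℝ} (hf : Continuous f) {E : ℝ}
    (hE : ∀ x, 0 ≤ x → x ≤ 1 → |∫ y in 0..x, f y| ≤ E) (u v : ℝ) (huv : u ≤ v) :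
    |∫ x in u..v, (Set.Ioc (0:ℝ) 1).indicator f x| ≤ 2 * E := by
  have hE0 : 0 ≤ E := (abs_nonneg _).trans (hE 0 le_rfl zero_le_one)
  rw [intervalIntegral.integral_of_le huv, setIntegral_indicator measurableSet_Ioc, Set.Ioc_inter_Ioc]
  rcases le_total (u ⊔ 0) (v ⊓ 1) with h | h
  · rw [← intervalIntegral.integral_of_le h, ← intervalIntegral.integral_interval_sub_left (a := 0)
      (hf.intervalIntegrable _ _) (hf.intervalIntegrable _ _)]
    have h1 := hE (u ⊔ 0) le_sup_right (h.trans inf_le_right)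
    have h2 := hE (v ⊓ 1) (le_sup_right.trans h) inf_le_right
    refine (abs_sub _ _).trans ?_
    linarith
  · rw [Set.Ioc_eq_empty (not_lt.2 h)]; simpa using hE0

/-- Theorem 1(III): if `1/s₁ + 1/s₂ < 1`, the acim's `μ_a` of `W_a` converge *-weakly, as
`a → 0⁺`, to the acim `μ₀` of `W₀`, whose density is `h0`. -/
theorem Wmap_acim_tendsto_acim_limit
    (s₁ s₂ p q r : ℝ) (hs₁ : 1 < s₁) (hs₂ : 1 < s₂)
    (hp : 0 < p) (hq : 0 < q) (hr : 0 < r)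
    (hsum : 1/s₁ + 1/s₂ < 1)
    (a₁ : ℝ) (ha₁ : 0 < a₁) (μ : ℝ → Measure ℝ)
    (hμ : ∀ a, 0 < a → a < a₁ →
      Set.MapsTo (Wmap s₁ s₂ p q r a) (Set.Icc 0 1) (Set.Icc 0 1) ∧
      IsProbabilityMeasure (μ a) ∧
      μ a ≪ volume ∧
      μ a (Set.Icc (0:ℝ) 1)ᶜ = 0 ∧
      (∀ A : Set ℝ, MeasurableSet A → μ a (Wmap s₁ s₂ p q r a ⁻¹' A) = μ a A)) :
    ∀ g : ℝ → ℝ, Continuous g →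
      Tendsto (fun a => ∫ x, g x ∂(μ a)) (𝓝[>] (0:ℝ))
        (𝓝 (∫ x in Set.Icc (0:ℝ) 1, g x * h0 s₁ s₂ x)) := by
  intro g hg
  have a1 : 0 < s₁ := by linarith
  have a2 : 0 < s₂ := by linarith
  have i1 : 1 / s₁ < 1 := by rw [div_lt_one a1]; exact hs₁
  have i2 : 1 / s₂ < 1 := by rw [div_lt_one a2]; exact hs₂
  obtain ⟨θ, hθ0, hθ1, hθ2, hθ⟩ : ∃ θ : ℝ, 1/s₁ + 1/s₂ ≤ θ ∧ (1 + 1/s₁)/2 ≤ θ ∧ (1 + 1/s₂)/2 ≤ θ ∧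
      θ < 1 :=
    ⟨max (1/s₁ + 1/s₂) (max ((1 + 1/s₁)/2) ((1 + 1/s₂)/2)), le_max_left _ _,
      (le_max_left _ _).trans (le_max_right _ _), (le_max_right _ _).trans (le_max_right _ _),
      max_lt hsum (max_lt (by linarith) (by linarith))⟩
  obtain ⟨δ, hδ, hδ1, hδ2⟩ : ∃ δ : ℝ, 0 < δ ∧ δ ≤ 1/2/(s₁ + p) ∧ δ ≤ 1/2/(s₂ + q) :=
    ⟨min (1/2/(s₁ + p)) (1/2/(s₂ + q)), lt_min (by positivity) (by positivity),
      min_le_left _ _, min_le_right _ _⟩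
  have hev : ∀ᶠ a in 𝓝[>] (0:ℝ), 0 < a ∧ a ≤ 1 ∧ a < a₁ ∧ 1 + 2 * (r * a) < s₁ + p * a ∧
      1 + 2 * (r * a) < s₂ + q * a := by
    have e1 : ∀ᶠ a in 𝓝 (0:ℝ), a < 1 := eventually_lt_nhds one_pos
    have e2 : ∀ᶠ a in 𝓝 (0:ℝ), a < a₁ := eventually_lt_nhds ha₁
    have e3 : ∀ᶠ a in 𝓝 (0:ℝ), 1 + 2 * (r * a) < s₁ + p * a :=
      (isOpen_lt (f := fun a : ℝ => 1 + 2 * (r * a)) (g := fun a : ℝ => s₁ + p * a)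
        (by fun_prop) (by fun_prop)).mem_nhds (by simpa using hs₁)
    have e4 : ∀ᶠ a in 𝓝 (0:ℝ), 1 + 2 * (r * a) < s₂ + q * a :=
      (isOpen_lt (f := fun a : ℝ => 1 + 2 * (r * a)) (g := fun a : ℝ => s₂ + q * a)
        (by fun_prop) (by fun_prop)).mem_nhds (by simpa using hs₂)
    filter_upwards [self_mem_nhdsWithin, nhdsWithin_le_nhds e1, nhdsWithin_le_nhds e2,
      nhdsWithin_le_nhds e3, nhdsWithin_le_nhds e4] with a h0 h1 h2 h3 h4
    exact ⟨h0, h1.le, h2, h3, h4⟩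
  -- the measures
  have hgood : ∀ᶠ a in 𝓝[>] (0:ℝ), IsProbabilityMeasure (μ a) ∧ μ a ≪ volume ∧
      (∀ᵐ x ∂(μ a), x ∈ Set.Icc (0:ℝ) 1) ∧
      MeasurePreserving (Wg (s₁ + p * a) (s₂ + q * a) (r * a)) (μ a) (μ a) := by
    filter_upwards [hev] with a ⟨h0, h1, h2, h3, h4⟩
    obtain ⟨-, m2, m3, m4, m5⟩ := hμ a h0 h2
    have hW := Wmap_eq (s₁ := s₁) (s₂ := s₂) (p := p) (q := q) (mul_pos hr h0).le h3 h4
    rw [hW] at m5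
    have hm : Measurable (Wg (s₁ + p * a) (s₂ + q * a) (r * a)) := (Wg_cont _ _ _).measurable
    refine ⟨m2, m3, m4, hm, ?_⟩
    ext A hA
    rw [Measure.map_apply hm hA, m5 A hA]
  have hint : ∀ ν : Measure ℝ, IsProbabilityMeasure ν → (∀ᵐ x ∂ν, x ∈ Set.Icc (0:ℝ) 1) →
      ∀ φ : ℝ → ℝ, Continuous φ → Integrable φ ν := by
    intro ν _ hν φ hφ
    obtain ⟨M, hM⟩ := (isCompact_Icc (a := (0:ℝ)) (b := 1)).exists_bound_of_continuousOn
      hφ.continuousOn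
    exact Integrable.of_bound hφ.aestronglyMeasurable M (hν.mono fun x hx => hM x hx)
  have hstep : ∀ φ : ℝ → ℝ, Continuous φ →
      Tendsto (fun a => (∫ x, φ (Wg s₁ s₂ 0 x) ∂(μ a)) - ∫ x, φ x ∂(μ a)) (𝓝[>] (0:ℝ)) (𝓝 0) := by
    intro φ hφ
    rw [Metric.tendsto_nhds]
    intro ε hε
    filter_upwards [hgood, nhdsWithin_le_nhds
      (Wmap_close (p := p) (q := q) (r := r) hs₁ hs₂ hφ (half_pos hε))] with a ⟨m1, m2, m3, m4⟩ hcl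
    have e : ∫ x, φ x ∂(μ a) = ∫ x, φ (Wg (s₁ + p * a) (s₂ + q * a) (r * a) x) ∂(μ a) := by
      conv_lhs => rw [← m4.map_eq]
      rw [integral_map m4.measurable.aemeasurable hφ.aestronglyMeasurable]
    rw [e, ← integral_sub (hint _ m1 m3 (fun x => φ (Wg s₁ s₂ 0 x)) (hφ.comp (Wg_cont _ _ _)))
      (hint _ m1 m3 (fun x => φ (Wg (s₁ + p * a) (s₂ + q * a) (r * a) x))
        (hφ.comp (Wg_cont _ _ _))), dist_zero_right]
    have := norm_integral_le_of_norm_le_const (μ := μ a) (C := ε / 2)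
      (f := fun x => φ (Wg s₁ s₂ 0 x) - φ (Wg (s₁ + p * a) (s₂ + q * a) (r * a) x))
      (m3.mono fun x hx => by rw [norm_sub_rev]; exact (hcl x hx).le)
    simp only [probReal_univ, mul_one] at this
    exact this.trans_lt (by linarith)
  have hiter : ∀ φ : ℝ → ℝ, Continuous φ → ∀ n : ℕ,
      Tendsto (fun a => (∫ x, φ ((Wg s₁ s₂ 0)^[n] x) ∂(μ a)) - ∫ x, φ x ∂(μ a))
        (𝓝[>] (0:ℝ)) (𝓝 0) := by
    intro φ hφ n
    induction n with
    | zero => simp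
    | succ n ih =>
      have h1 := hstep (fun x => φ ((Wg s₁ s₂ 0)^[n] x)) (hφ.comp ((Wg_cont _ _ _).iterate n))
      have h2 := h1.add ih
      rw [add_zero] at h2
      refine h2.congr fun a => ?_
      simp only [Function.iterate_succ, Function.comp]
      ring
  -- the mean
  set G := ∫ x in Set.Icc (0:ℝ) 1, g x * h0 s₁ s₂ x with hG
  have hΔ : 0 < 2*s₁*s₂+s₁-s₂ := by nlinarith
  have hGval : G = 2*s₁*(s₂+1)/(2*s₁*s₂+s₁-s₂) * (∫ x in 0..(1/2), g x)
      + 2*s₂*(s₁-1)/(2*s₁*s₂+s₁-s₂) * (∫ x in (1/2)..1, g x) := by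
    have hu : Set.Icc (0:ℝ) 1 = Set.Ico 0 (1/2) ∪ Set.Icc (1/2) 1 := by
      rw [Set.Ico_union_Icc_eq_Icc] <;> norm_num
    have hd : Disjoint (Set.Ico (0:ℝ) (1/2)) (Set.Icc (1/2) 1) := by
      rw [Set.disjoint_left]; intro x hx hx'; linarith [hx.2, hx'.1]
    have c1 : Set.EqOn (fun x => g x * h0 s₁ s₂ x)
        (fun x => 2*s₁*(s₂+1)/(2*s₁*s₂+s₁-s₂) * g x) (Set.Ico (0:ℝ) (1/2)) := by
      intro x hx; simp only [h0, if_pos hx.2]; ring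
    have c2 : Set.EqOn (fun x => g x * h0 s₁ s₂ x)
        (fun x => 2*s₂*(s₁-1)/(2*s₁*s₂+s₁-s₂) * g x) (Set.Icc (1/2:ℝ) 1) := by
      intro x hx; simp only [h0, if_neg (not_lt.2 hx.1)]; ring
    have J1 : IntegrableOn (fun x => 2*s₁*(s₂+1)/(2*s₁*s₂+s₁-s₂) * g x) (Set.Ico (0:ℝ) (1/2)) :=
      ((Continuous.integrableOn_Icc (by fun_prop)).mono_set Set.Ico_subset_Icc_self)
    have J2 : IntegrableOn (fun x => 2*s₂*(s₁-1)/(2*s₁*s₂+s₁-s₂) * g x) (Set.Icc (1/2:ℝ) 1) :=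
      Continuous.integrableOn_Icc (by fun_prop)
    rw [hG, hu, setIntegral_union hd measurableSet_Icc
      (J1.congr_fun c1.symm measurableSet_Ico) (J2.congr_fun c2.symm measurableSet_Icc),
      setIntegral_congr_fun measurableSet_Ico c1, setIntegral_congr_fun measurableSet_Icc c2,
      integral_const_mul, integral_const_mul, integral_Ico_eq_integral_Ioo,
      ← integral_Ioc_eq_integral_Ioo, integral_Icc_eq_integral_Ioc,
      ← intervalIntegral.integral_of_le (by norm_num), ← intervalIntegral.integral_of_le (by norm_num)]
  set f : ℝ → ℝ := fun x => g x - G with hf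
  have hfc : Continuous f := hg.sub continuous_const
  have I : ∀ u v, IntervalIntegrable g volume u v := fun u v => hg.intervalIntegrable u v
  have hrel : (s₁ + s₂) * (∫ y in 0..(1/2), f y) + s₂ * (s₁ - 1) * (∫ y in 0..1, f y) = 0 := by
    simp only [hf]
    rw [intervalIntegral.integral_sub (I _ _) (by simp), intervalIntegral.integral_sub (I _ _) (by simp),
      ← intervalIntegral.integral_add_adjacent_intervals (I 0 (1/2)) (I (1/2) 1)]
    simp only [intervalIntegral.integral_const, smul_eq_mul]
    have hGv : G * (2*s₁*s₂+s₁-s₂) = 2*s₁*(s₂+1) * (∫ x in 0..(1/2), g x)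
        + 2*s₂*(s₁-1) * (∫ x in (1/2)..1, g x) := by
      have aux : ∀ A B P Q d : ℝ, d ≠ 0 → (A / d * P + B / d * Q) * d = A * P + B * Q := by
        intro A B P Q d hd; field_simp
      rw [hGval]; exact aux _ _ _ _ _ hΔ.ne'
    linear_combination (-1/2) * hGv
  obtain ⟨D, ρ, hρ0, hρ1, hmix⟩ := W0_mix hs₁ hs₂ hfc hrel
  have hbound : ∀ n : ℕ, ∀ᶠ a in 𝓝[>] (0:ℝ),
      |∫ x, f ((Wg s₁ s₂ 0)^[n] x) ∂(μ a)| ≤ 1 / δ / (1 - θ) * (2 * (D * ρ ^ n)) := by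
    intro n
    have hc : Continuous (fun x => f ((Wg s₁ s₂ 0)^[n] x)) := hfc.comp ((Wg_cont _ _ _).iterate n)
    obtain ⟨M, hM⟩ := (isCompact_Icc (a := (0:ℝ)) (b := 1)).exists_bound_of_continuousOn
      hc.continuousOn
    have hM0 : 0 ≤ M := (norm_nonneg _).trans (hM 0 (by simp))
    filter_upwards [hgood, hev] with a ⟨m1, m2, m3, m4⟩ ⟨h0, h1, h2, h3, h4⟩
    have := W_LY h0 h1 hs₁ hs₂ hp hq hr h3 h4 hθ0 hθ1 hθ2 hθ hδ hδ1 hδ2 m2 m4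
      (f := (Set.Ioc (0:ℝ) 1).indicator (fun x => f ((Wg s₁ s₂ 0)^[n] x)))
      (hc.measurable.indicator measurableSet_Ioc) (M := M) (N := 2 * (D * ρ ^ n))
      (fun x => by
        by_cases hx : x ∈ Set.Ioc (0:ℝ) 1
        · rw [Set.indicator_of_mem hx]; exact hM x ⟨hx.1.le, hx.2⟩
        · rw [Set.indicator_of_notMem hx]; simpa using hM0)
      (fun u v huv => W_clip hc (hmix n) u v huv)
    have hne : ∀ᵐ x ∂(μ a), x ≠ 0 := by
      rw [ae_iff]; exact m2 (by simp)
    have e : ∫ x, f ((Wg s₁ s₂ 0)^[n] x) ∂(μ a)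
        = ∫ x, (Set.Ioc (0:ℝ) 1).indicator (fun x => f ((Wg s₁ s₂ 0)^[n] x)) x ∂(μ a) := by
      refine integral_congr_ae ?_
      filter_upwards [m3, hne] with x hx hx0
      rw [Set.indicator_of_mem (show x ∈ Set.Ioc (0:ℝ) 1 from ⟨lt_of_le_of_ne hx.1 (Ne.symm hx0), hx.2⟩)]
    rw [e]; exact this
  rw [Metric.tendsto_nhds]
  intro ε hε
  have hlim : Tendsto (fun n : ℕ => 1 / δ / (1 - θ) * (2 * (D * ρ ^ n))) atTop (𝓝 0) := by
    have := (((tendsto_pow_atTop_nhds_zero_of_lt_one hρ0 hρ1).const_mul D).const_mul 2).const_mul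
      (1 / δ / (1 - θ))
    simpa using this
  obtain ⟨n, hn⟩ := (hlim.eventually (gt_mem_nhds (half_pos hε))).exists
  filter_upwards [hbound n, Metric.tendsto_nhds.1 (hiter f hfc n) (ε / 2) (half_pos hε), hgood]
    with a b1 b2 ⟨m1, m2, m3, m4⟩
  have e : ∫ x, f x ∂(μ a) = (∫ x, g x ∂(μ a)) - G := by
    simp only [hf]
    rw [integral_sub (hint _ m1 m3 g hg) (integrable_const _)]
    simp
  rw [Real.dist_eq, ← e]
  rw [dist_zero_right, Real.norm_eq_abs, abs_sub_comm] at b2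
  have := abs_sub_abs_le_abs_sub (∫ x, f x ∂(μ a)) (∫ x, f ((Wg s₁ s₂ 0)^[n] x) ∂(μ a))
  linarith
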